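/- arXiv:2305.09796 — 2 statements merged into one kernel-verified Lean document; each statement's English description precedes it below -/
import Mathlib

section
/- Let (D,V) be a Dyer system and let X ⊆ V. For every g ∈ D there exists a unique element g_0' of the right coset D_X g such that for all h ∈ D_X one has l_sy(h g_0') = l_sy(h) + l_sy(g_0') and l_V(h g_0') = l_V(h) + l_V(g_0'). -/
/-!
The proof encodes both lengths in one cocycle. Write `n_x = (f x).toNat`, so that `n_x = 0` when
`f x = ∞` and `ZMod n_x` is the cyclic group generated by `x` in all cases. The group `D` acts by
conjugation on the functions `D → ∏ n, ZMod n`, and there is a unique crossed homomorphism `N` into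
them with `N x` equal to `1` at `(x, n_x)` and `0` elsewhere. It is well defined: a commutation
relation gives `δ_x + δ_y` on both sides, and for a braid relation between involutions the two sides
enumerate the same reflections `(xy)^k x`, in opposite orders.

Deletion (`DyerGraph.exists_deletion`): if `N g` is nonzero at `(r, n)`, then some syllable of any
expression of `g` can be removed by multiplying `g` on the left by a power of `r`. Hence the walls
`(r, n)` crossed by a syllable-minimal expression are distinct, which yields

* `l_sy g` is the number of pairs `(r, n)` with `N g r n ≠ 0` (`DyerGraph.sylLength_eq`);
* `l_V g` is the sum over `(r, n)` of the smallest absolute value of an integer representing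
  `N g r n` (`DyerGraph.wordLength_eq`).

For `h ∈ D_X` the support of `N h` lies in `D_X × ℕ`. If `g₀` has minimal syllable length in
`D_X g`, then by deletion the support of `N g₀` avoids `D_X × ℕ`, and so does that of the translate
`h • N g₀`. Since `N (h g₀) = N h + h • N g₀`, both lengths are additive. If `g₁` in the coset also
has the additivity property, write `g₀ = h g₁` with `h ∈ D_X`; then `l_sy g₀ = l_sy h + l_sy g₁`, so
minimality of `g₀` forces `l_sy h = 0` and `g₀ = g₁`.
-/


open scoped Classical

/-- The word length of `g` with respect to the alphabet `S ∪ S⁻¹`. -/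
noncomputable def wordLength {G : Type*} [Group G] (S : Set G) (g : G) : ℕ :=
  sInf {n | ∃ w : List G, w.length = n ∧ (∀ a ∈ w, a ∈ S ∪ S⁻¹) ∧ w.prod = g}

/-- The syllable length of `g` with respect to `S`. -/
noncomputable def sylLength {G : Type*} [Group G] (S : Set G) (g : G) : ℕ :=
  sInf {n | ∃ w : List (G × ℤ), w.length = n ∧ (∀ p ∈ w, p.1 ∈ S) ∧
    (w.map fun p => p.1 ^ p.2).prod = g}

/-- The growth series of a subset `A` of a group `G` with respect to a generating set `S`:
the coefficient of `t^n` is the number of elements of `A` of word length `n`. -/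
noncomputable def growthSeries {G : Type*} [Group G] (S : Set G) (A : Set G) :
    PowerSeries ℤ :=
  PowerSeries.mk fun n => (Set.ncard {g ∈ A | wordLength S g = n} : ℤ)

/-- A Dyer graph. -/
structure DyerGraph (V : Type*) where
  Adj : V → V → Prop
  symm : ∀ {x y}, Adj x y → Adj y x
  loopless : ∀ x, ¬ Adj x x
  m : V → V → ℕ
  m_symm : ∀ x y, m x y = m y x
  m_ge : ∀ {x y}, Adj x y → 2 ≤ m x y
  f : V → ℕ∞
  f_ge : ∀ x, 2 ≤ f x
  compat : ∀ {x y}, Adj x y → m x y ≠ 2 → f x = 2 ∧ f y = 2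

namespace DyerGraph

variable {V : Type*} (Γ : DyerGraph V)

/-- The alternating word `π(x, y, n) = xyxy⋯` of length `n` in the free group. -/
def altWord (x y : V) : ℕ → FreeGroup V
  | 0 => 1
  | n + 1 => FreeGroup.of x * altWord y x n

/-- The defining relations of the Dyer group. -/
def rels : Set (FreeGroup V) :=
  {r | ∃ x : V, Γ.f x ≠ ⊤ ∧ r = FreeGroup.of x ^ (Γ.f x).toNat} ∪
  {r | ∃ x y : V, Γ.Adj x y ∧
      r = altWord x y (Γ.m x y) * (altWord y x (Γ.m x y))⁻¹}

/-- The Dyer group associated to a Dyer graph. -/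
abbrev DyerGroup := PresentedGroup Γ.rels

/-- The standard generator of the Dyer group corresponding to a vertex. -/
def gen (x : V) : Γ.DyerGroup := PresentedGroup.of x

/-- The standard parabolic subgroup generated by `X ⊆ V`. -/
def parabolic (X : Set V) : Subgroup Γ.DyerGroup := Subgroup.closure (Γ.gen '' X)

/-- The set of vertices with `f x = 2`. -/
def V2 : Set V := {x | Γ.f x = 2}

/-- The set of vertices with `2 < f x < ∞`. -/
def Vp : Set V := {x | 2 < Γ.f x ∧ Γ.f x ≠ ⊤}

/-- The set of vertices with `f x = ∞`. -/
def Vinf : Set V := {x | Γ.f x = ⊤}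

/-- A Dyer group is of spherical type if the graph is complete and `D_2` is finite. -/
def Spherical : Prop :=
  (∀ x y : V, x ≠ y → Γ.Adj x y) ∧ (Γ.parabolic Γ.V2 : Set Γ.DyerGroup).Finite

/-- The set `A_X` of `X`-minimal elements. -/
def Amin (X : Set V) : Set Γ.DyerGroup :=
  {g | ∀ h ∈ Γ.parabolic X,
    sylLength (Set.range Γ.gen) g ≤ sylLength (Set.range Γ.gen) (g * h)}

/-- The set `B_X = A_X ∖ ⋃_{X ⊊ Y} A_Y`. -/
def Bmin (X : Set V) : Set Γ.DyerGroup :=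
  Γ.Amin X \ ⋃ (Y : Set V) (_ : X ⊂ Y), Γ.Amin Y

end DyerGraph

/-! ### Generalities on syllable and word length -/

section Lengths

variable {G : Type*} [Group G] {S : Set G}

theorem sylLength_le (w : List (G × ℤ)) (hw : ∀ p ∈ w, p.1 ∈ S) :
    sylLength S (w.map fun p => p.1 ^ p.2).prod ≤ w.length :=
  Nat.sInf_le ⟨w, rfl, hw, rfl⟩

theorem wordLength_le (w : List G) (hw : ∀ a ∈ w, a ∈ S ∪ S⁻¹) :
    wordLength S w.prod ≤ w.length :=
  Nat.sInf_le ⟨w, rfl, hw, rfl⟩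

theorem exists_sylWord (hS : Subgroup.closure S = ⊤) (g : G) :
    ∃ w : List (G × ℤ), w.length = sylLength S g ∧ (∀ p ∈ w, p.1 ∈ S) ∧
      (w.map fun p => p.1 ^ p.2).prod = g := by
  have hne : {n | ∃ w : List (G × ℤ), w.length = n ∧ (∀ p ∈ w, p.1 ∈ S) ∧
      (w.map fun p => p.1 ^ p.2).prod = g}.Nonempty := by
    have hg : g ∈ Subgroup.closure S := hS ▸ Subgroup.mem_top g
    induction hg using Subgroup.closure_induction_left with
    | one => exact ⟨0, [], by simp⟩
    | mul_left x hx y _ ih =>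
      obtain ⟨n, w, hn, hw, rfl⟩ := ih
      exact ⟨_, (x, 1) :: w, rfl, by simpa [hx] using hw, by simp⟩
    | inv_mul_cancel x hx y _ ih =>
      obtain ⟨n, w, hn, hw, rfl⟩ := ih
      exact ⟨_, (x, -1) :: w, rfl, by simpa [hx] using hw, by simp⟩
  exact Nat.sInf_mem hne

theorem exists_word (hS : Subgroup.closure S = ⊤) (g : G) :
    ∃ w : List G, w.length = wordLength S g ∧ (∀ a ∈ w, a ∈ S ∪ S⁻¹) ∧ w.prod = g := by
  have hne : {n | ∃ w : List G, w.length = n ∧ (∀ a ∈ w, a ∈ S ∪ S⁻¹) ∧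
      w.prod = g}.Nonempty := by
    have hg : g ∈ Subgroup.closure S := hS ▸ Subgroup.mem_top g
    rw [← Subgroup.mem_toSubmonoid, Subgroup.closure_toSubmonoid] at hg
    obtain ⟨w, hw, h⟩ := Submonoid.exists_list_of_mem_closure hg
    exact ⟨_, w, rfl, fun a ha => hw a ha, h⟩
  exact Nat.sInf_mem hne

theorem eq_one_of_sylLength_eq_zero (hS : Subgroup.closure S = ⊤) {g : G}
    (h : sylLength S g = 0) : g = 1 := by
  obtain ⟨w, hl, -, rfl⟩ := exists_sylWord hS g
  rw [h, List.length_eq_zero_iff] at hl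
  simp [hl]

theorem sylLength_zpow_mul_le (hS : Subgroup.closure S = ⊤) {x : G} (hx : x ∈ S) (a : ℤ) (g : G) :
    sylLength S (x ^ a * g) ≤ sylLength S g + 1 := by
  obtain ⟨w, hl, hw, hg⟩ := exists_sylWord hS g
  have := sylLength_le (S := S) ((x, a) :: w) (by simpa [hx] using hw)
  simpa [hg, hl] using this

theorem wordLength_mul_le (hS : Subgroup.closure S = ⊤) (g h : G) :
    wordLength S (g * h) ≤ wordLength S g + wordLength S h := by
  obtain ⟨w, hl, hw, hg⟩ := exists_word hS g
  obtain ⟨w', hl', hw', hg'⟩ := exists_word hS h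
  have := wordLength_le (S := S) (w ++ w') (by
    intro a ha
    rcases List.mem_append.mp ha with h | h
    exacts [hw a h, hw' a h])
  simpa [hg, hl, hg', hl'] using this

theorem wordLength_zpow_le {x : G} (hx : x ∈ S) (a : ℤ) : wordLength S (x ^ a) ≤ a.natAbs := by
  obtain ⟨n, rfl | rfl⟩ := a.eq_nat_or_neg
  · simpa using wordLength_le (S := S) (List.replicate n x) (by
      intro a ha
      rw [List.eq_of_mem_replicate ha]
      exact Or.inl hx)
  · simpa using wordLength_le (S := S) (List.replicate n x⁻¹) (by
      intro a ha
      rw [List.eq_of_mem_replicate ha]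
      exact Or.inr (by simpa using hx))

end Lengths

namespace DyerGraph

/-! ### Functions on a group under conjugation -/

section Conj

variable {G : Type*} [Group G]

/-- Coefficient functions on walls: a wall is a pair `(r, n)` of an element of `G` and an order `n`,
and its coefficient is a residue modulo `n` (an integer if `n = 0`). -/
abbrev Coeff (G : Type*) : Type _ := G → (n : ℕ) → ZMod n

/-- The action of `G` on coefficient functions induced by conjugation on `G`. -/
def act (g : G) (b : Coeff G) : Coeff G := fun r => b (g⁻¹ * r * g)

theorem act_add (g : G) (b c : Coeff G) : act g (b + c) = act g b + act g c := rfl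

theorem act_zero (g : G) : act g (0 : Coeff G) = 0 := rfl

theorem act_one (b : Coeff G) : act 1 b = b := by
  funext r; simp [act]

theorem act_mul (g h : G) (b : Coeff G) : act (g * h) b = act g (act h b) := by
  funext r; simp [act, mul_assoc]

theorem act_single (g r : G) (a : (n : ℕ) → ZMod n) :
    act g (Pi.single r a : Coeff G) = Pi.single (g * r * g⁻¹) a := by
  funext s
  by_cases h : s = g * r * g⁻¹
  · subst h
    simp [act, mul_assoc]
  · have h' : g⁻¹ * s * g ≠ r := by
      rintro rfl
      exact h (by group)
    simp [act, Pi.single_eq_of_ne h, Pi.single_eq_of_ne h']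

theorem act_sum (g : G) (s : Finset ℕ) (b : ℕ → Coeff G) :
    act g (∑ k ∈ s, b k) = ∑ k ∈ s, act g (b k) := by
  funext r; simp [act]

/-- The affine permutation `b ↦ c + g • b` of the coefficient functions. -/
def aff (c : Coeff G) (g : G) : Equiv.Perm (Coeff G) where
  toFun b := c + act g b
  invFun b := act g⁻¹ (b - c)
  left_inv b := by simp [← act_mul, act_one]
  right_inv b := by simp [← act_mul, act_one]

theorem aff_apply (c : Coeff G) (g : G) (b : Coeff G) : aff c g b = c + act g b := rfl

theorem aff_mul (c c' : Coeff G) (g g' : G) :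
    aff c g * aff c' g' = aff (c + act g c') (g * g') := by
  ext1 b
  simp only [Equiv.Perm.mul_apply, aff_apply, act_add, act_mul, add_assoc]

theorem aff_zero_one : aff (0 : Coeff G) 1 = 1 := by
  ext1 b
  simp [aff_apply, act_one]

theorem aff_inv (c : Coeff G) (g : G) : (aff c g)⁻¹ = aff (-act g⁻¹ c) g⁻¹ := by
  rw [inv_eq_iff_mul_eq_one, aff_mul, ← aff_zero_one]
  have : act g (-act g⁻¹ c) = -c := by
    have h := act_mul g g⁻¹ c
    rw [mul_inv_cancel, act_one] at h
    conv_rhs => rw [h]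
    rfl
  rw [this]; simp

end Conj

variable {V : Type*} (Γ : DyerGraph V)

/-! ### The wall cocycle -/

/-- The order of the generator `x`, with `0` standing for infinite order. -/
noncomputable def ord (x : V) : ℕ := (Γ.f x).toNat

/-- The indicator of the order of `x` in `∏ n, ZMod n`. -/
noncomputable def unitAt (x : V) : (n : ℕ) → ZMod n := Pi.single (Γ.ord x) 1

/-- The homomorphism from the free group to affine permutations which induces the wall cocycle. -/
noncomputable def freeAff : FreeGroup V →* Equiv.Perm (Coeff Γ.DyerGroup) :=
  FreeGroup.lift fun x => aff (Pi.single (Γ.gen x) (Γ.unitAt x)) (Γ.gen x)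

theorem freeAff_of (x : V) :
    Γ.freeAff (FreeGroup.of x) = aff (Pi.single (Γ.gen x) (Γ.unitAt x)) (Γ.gen x) := by
  simp [freeAff]

theorem gen_pow_ord (x : V) : Γ.gen x ^ Γ.ord x = 1 := by
  by_cases h : Γ.f x = ⊤
  · simp [ord, h]
  · exact PresentedGroup.one_of_mem (rels := Γ.rels) (Or.inl ⟨x, h, rfl⟩)

theorem mk_altWord_eq {x y : V} (h : Γ.Adj x y) :
    PresentedGroup.mk Γ.rels (altWord x y (Γ.m x y)) =
      PresentedGroup.mk Γ.rels (altWord y x (Γ.m x y)) := by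
  have := PresentedGroup.one_of_mem (rels := Γ.rels) (Or.inr ⟨x, y, h, rfl⟩)
  rwa [map_mul, map_inv, mul_inv_eq_one] at this

theorem freeAff_pow (x : V) (k : ℕ) : Γ.freeAff (FreeGroup.of x ^ k) =
    aff (k • Pi.single (Γ.gen x) (Γ.unitAt x)) (Γ.gen x ^ k) := by
  induction k with
  | zero => simp [aff_zero_one]
  | succ k ih =>
    rw [pow_succ', map_mul, ih, freeAff_of, aff_mul, ← pow_succ', succ_nsmul']
    congr 2
    rw [← Pi.single_smul, act_single]
    simp

/-- An alternating word in two involutions of `D` crosses the reflections `(xy)^i x`, one per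
letter. -/
theorem freeAff_altWord (x y : V) (hx : Γ.gen x * Γ.gen x = 1) (hy : Γ.gen y * Γ.gen y = 1)
    (e : (n : ℕ) → ZMod n) (hex : Γ.unitAt x = e) (hey : Γ.unitAt y = e) (k : ℕ) :
    Γ.freeAff (altWord x y k) =
      aff (∑ i ∈ Finset.range k, Pi.single ((Γ.gen x * Γ.gen y) ^ i * Γ.gen x) e)
        (PresentedGroup.mk Γ.rels (altWord x y k)) := by
  induction k generalizing x y with
  | zero => simp [altWord, aff_zero_one]
  | succ k ih =>
    rw [altWord, map_mul, ih y x hy hx hey hex, freeAff_of, aff_mul, map_mul, hex]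
    congr 1
    rw [Finset.sum_range_succ', act_sum, add_comm]
    congr 1
    · refine Finset.sum_congr rfl fun i _ => ?_
      rw [act_single]
      congr 1
      rw [inv_eq_of_mul_eq_one_right hx, pow_succ, ← mul_assoc (Γ.gen x)]
      have hs : SemiconjBy (Γ.gen x) (Γ.gen y * Γ.gen x) (Γ.gen x * Γ.gen y) := by
        simp [SemiconjBy, mul_assoc]
      rw [(hs.pow_right i).eq]
      simp [mul_assoc]

theorem mk_altWord_of_inv (x y : V) (hx : Γ.gen x * Γ.gen x = 1) (hy : Γ.gen y * Γ.gen y = 1)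
    (k : ℕ) : PresentedGroup.mk Γ.rels (altWord x y k) *
      (PresentedGroup.mk Γ.rels (altWord y x k))⁻¹ = (Γ.gen x * Γ.gen y) ^ k := by
  induction k generalizing x y with
  | zero => simp [altWord]
  | succ k ih =>
    have h := ih y x hy hx
    rw [altWord, altWord, map_mul, map_mul, mul_inv_rev]
    change Γ.gen x * _ * (_ * (Γ.gen y)⁻¹) = _
    rw [mul_assoc, ← mul_assoc _ _ (Γ.gen y)⁻¹, h, inv_eq_of_mul_eq_one_right hy, ← mul_assoc]
    have hs : SemiconjBy (Γ.gen x) (Γ.gen y * Γ.gen x) (Γ.gen x * Γ.gen y) := by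
      simp [SemiconjBy, mul_assoc]
    rw [(hs.pow_right k).eq, pow_succ, mul_assoc]

theorem freeAff_rels (r : FreeGroup V) (hr : r ∈ Γ.rels) : Γ.freeAff r = 1 := by
  rcases hr with ⟨x, hx, rfl⟩ | ⟨x, y, hxy, rfl⟩
  · change Γ.freeAff (FreeGroup.of x ^ Γ.ord x) = 1
    rw [freeAff_pow, gen_pow_ord, ← aff_zero_one, ← Pi.single_smul]
    congr 1
    rw [unitAt, ← Pi.single_smul]
    simp
  · rw [map_mul, map_inv, mul_inv_eq_one]
    have hmk := Γ.mk_altWord_eq hxy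
    by_cases hm : Γ.m x y = 2
    · rw [hm] at hmk ⊢
      have hc : Γ.gen x * Γ.gen y = Γ.gen y * Γ.gen x := by
        simp only [altWord, mul_one, map_mul] at hmk
        exact hmk
      have h1 : Γ.gen x * Γ.gen y * (Γ.gen x)⁻¹ = Γ.gen y := by rw [hc]; group
      have h2 : Γ.gen y * Γ.gen x * (Γ.gen y)⁻¹ = Γ.gen x := by rw [← hc]; group
      simp only [altWord, mul_one, map_mul, freeAff_of, aff_mul, act_single, h1, h2]
      rw [hc, add_comm]
    · obtain ⟨hfx, hfy⟩ := Γ.compat hxy hm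
      have hox : Γ.ord x = 2 := by simp [ord, hfx]
      have hoy : Γ.ord y = 2 := by simp [ord, hfy]
      have hx : Γ.gen x * Γ.gen x = 1 := by rw [← sq, ← hox, gen_pow_ord]
      have hy : Γ.gen y * Γ.gen y = 1 := by rw [← sq, ← hoy, gen_pow_ord]
      have hex : Γ.unitAt x = Pi.single 2 1 := by rw [unitAt, hox]
      have hey : Γ.unitAt y = Pi.single 2 1 := by rw [unitAt, hoy]
      rw [Γ.freeAff_altWord x y hx hy _ hex hey, Γ.freeAff_altWord y x hy hx _ hey hex, hmk]
      congr 1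
      have hpow : (Γ.gen x * Γ.gen y) ^ Γ.m x y = 1 := by
        rw [← Γ.mk_altWord_of_inv x y hx hy, hmk, mul_inv_cancel]
      -- the reflections crossed by the two words agree up to reversing the order
      rw [← Finset.sum_range_reflect]
      refine Finset.sum_congr rfl fun i hi => ?_
      congr 1
      have hi' : Γ.m x y = (Γ.m x y - 1 - i) + (i + 1) := by
        have := Finset.mem_range.mp hi
        omega
      rw [hi', pow_add] at hpow
      have hyx : Γ.gen y * Γ.gen x = (Γ.gen x * Γ.gen y)⁻¹ := by
        rw [mul_inv_rev, inv_eq_of_mul_eq_one_right hx, inv_eq_of_mul_eq_one_right hy]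
      rw [eq_inv_of_mul_eq_one_left hpow, ← inv_pow, ← hyx, pow_succ, mul_assoc, mul_assoc, hx,
        mul_one]

/-- The action of the Dyer group on coefficient functions by affine permutations. -/
noncomputable def dyerAff : Γ.DyerGroup →* Equiv.Perm (Coeff Γ.DyerGroup) :=
  PresentedGroup.toGroup (rels := Γ.rels)
    (f := fun x => aff (Pi.single (Γ.gen x) (Γ.unitAt x)) (Γ.gen x)) Γ.freeAff_rels

theorem dyerAff_gen (x : V) :
    Γ.dyerAff (Γ.gen x) = aff (Pi.single (Γ.gen x) (Γ.unitAt x)) (Γ.gen x) :=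
  PresentedGroup.toGroup.of _

theorem closure_range_gen : Subgroup.closure (Set.range Γ.gen) = ⊤ :=
  PresentedGroup.closure_range_of Γ.rels

theorem dyerAff_eq_aff (g : Γ.DyerGroup) : ∃ c, Γ.dyerAff g = aff c g := by
  have hg : g ∈ Subgroup.closure (Set.range Γ.gen) := Γ.closure_range_gen ▸ Subgroup.mem_top g
  induction hg using Subgroup.closure_induction with
  | mem x hx =>
    obtain ⟨v, rfl⟩ := hx
    exact ⟨_, Γ.dyerAff_gen v⟩
  | one => exact ⟨0, by rw [map_one, aff_zero_one]⟩
  | mul x y _ _ hx hy =>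
    obtain ⟨c, hc⟩ := hx
    obtain ⟨d, hd⟩ := hy
    exact ⟨_, by rw [map_mul, hc, hd, aff_mul]⟩
  | inv x _ hx =>
    obtain ⟨c, hc⟩ := hx
    exact ⟨_, by rw [map_inv, hc, aff_inv]⟩

/-- The wall cocycle: `N g r n` is the total rotation about the wall `(r, n)` along any expression
of `g`, a residue modulo the order `n` of that wall. -/
noncomputable def N (g : Γ.DyerGroup) : Coeff Γ.DyerGroup := Γ.dyerAff g 0

theorem N_mul (g h : Γ.DyerGroup) : Γ.N (g * h) = Γ.N g + act g (Γ.N h) := by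
  obtain ⟨c, hc⟩ := Γ.dyerAff_eq_aff g
  simp only [N, map_mul, Equiv.Perm.mul_apply, hc, aff_apply, act_zero, add_zero]

theorem N_mul_apply (g h r : Γ.DyerGroup) (n : ℕ) :
    Γ.N (g * h) r n = Γ.N g r n + Γ.N h (g⁻¹ * r * g) n := by
  rw [N_mul]; rfl

theorem N_one : Γ.N 1 = 0 := by simp [N]

theorem N_gen (x : V) : Γ.N (Γ.gen x) = Pi.single (Γ.gen x) (Γ.unitAt x) := by
  simp [N, dyerAff_gen, aff_apply, act_zero]

theorem N_inv_apply (g r : Γ.DyerGroup) (n : ℕ) :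
    Γ.N g⁻¹ r n = -Γ.N g (g * r * g⁻¹) n := by
  have h := Γ.N_mul_apply g⁻¹ g r n
  rw [inv_mul_cancel, N_one, inv_inv] at h
  exact eq_neg_of_add_eq_zero_left h.symm

theorem N_gen_zpow (x : V) (a : ℤ) :
    Γ.N (Γ.gen x ^ a) = Pi.single (Γ.gen x) (a • Γ.unitAt x) := by
  have step : ∀ k : ℤ, Γ.N (Γ.gen x ^ (k + 1)) =
      Γ.N (Γ.gen x ^ k) + Pi.single (Γ.gen x) (Γ.unitAt x) := by
    intro k
    rw [zpow_add_one, N_mul, N_gen, act_single]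
    congr 2
    rw [(Commute.refl (Γ.gen x)).zpow_left k, mul_inv_cancel_right]
  induction a using Int.induction_on with
  | zero => simp [N_one]
  | succ k ih => rw [step, ih, add_smul, one_smul, Pi.single_add]
  | pred k ih =>
    have h := step (-(k : ℤ) - 1)
    rw [sub_add_cancel, ih] at h
    rw [sub_smul, one_smul, Pi.single_sub, h, add_sub_cancel_right]

theorem N_gen_zpow_self (x : V) (a : ℤ) :
    Γ.N (Γ.gen x ^ a) (Γ.gen x) (Γ.ord x) = a := by
  rw [N_gen_zpow]
  simp [unitAt]

theorem N_gen_zpow_of_ne (x : V) (a : ℤ) {p : Γ.DyerGroup × ℕ} (h : p ≠ (Γ.gen x, Γ.ord x)) :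
    Γ.N (Γ.gen x ^ a) p.1 p.2 = 0 := by
  obtain ⟨r, n⟩ := p
  rw [N_gen_zpow]
  by_cases hr : r = Γ.gen x
  · subst hr
    have hn : n ≠ Γ.ord x := fun h' => h (by rw [h'])
    simp [unitAt, Pi.single_eq_of_ne hn]
  · simp [Pi.single_eq_of_ne hr]

theorem gen_zpow_eq_of_cast_eq (x : V) {a b : ℤ} (h : (a : ZMod (Γ.ord x)) = b) :
    Γ.gen x ^ a = Γ.gen x ^ b := by
  obtain ⟨c, hc⟩ := (ZMod.intCast_eq_intCast_iff_dvd_sub a b _).mp h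
  have : b = a + Γ.ord x * c := by omega
  rw [this, zpow_add, zpow_mul, zpow_natCast, gen_pow_ord, one_zpow, mul_one]

theorem syl_induction {P : Γ.DyerGroup → Prop} (one : P 1)
    (mul : ∀ x a g, P g → P (Γ.gen x ^ (a : ℤ) * g)) (g : Γ.DyerGroup) : P g := by
  obtain ⟨w, -, hw, rfl⟩ := exists_sylWord Γ.closure_range_gen g
  induction w with
  | nil => simpa using one
  | cons p w ih =>
    obtain ⟨⟨x, hx⟩, hw⟩ := List.forall_mem_cons.mp hw
    rw [List.map_cons, List.prod_cons, ← hx]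
    exact mul _ _ _ (ih hw)

theorem N_finite (g : Γ.DyerGroup) :
    {p : Γ.DyerGroup × ℕ | Γ.N g p.1 p.2 ≠ 0}.Finite := by
  induction g using Γ.syl_induction with
  | one => simp [N_one]
  | mul x a g ih =>
    refine ((Set.finite_singleton (Γ.gen x, Γ.ord x)).union (ih.image fun p =>
      (Γ.gen x ^ a * p.1 * (Γ.gen x ^ a)⁻¹, p.2))).subset ?_
    intro p hp
    by_cases h : p = (Γ.gen x, Γ.ord x)
    · exact Or.inl h
    · refine Or.inr ⟨((Γ.gen x ^ a)⁻¹ * p.1 * Γ.gen x ^ a, p.2), ?_, ?_⟩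
      · rw [Set.mem_ofPred_eq, N_mul_apply, N_gen_zpow_of_ne _ _ _ h, zero_add] at hp
        exact hp
      · ext1
        · group
        · rfl

theorem N_parabolic {X : Set V} {h : Γ.DyerGroup} (hh : h ∈ Γ.parabolic X)
    (r : Γ.DyerGroup) (n : ℕ) (hr : Γ.N h r n ≠ 0) : r ∈ Γ.parabolic X := by
  unfold parabolic at hh ⊢
  induction hh using Subgroup.closure_induction generalizing r with
  | mem x hx =>
    obtain ⟨v, hv, rfl⟩ := hx
    by_contra hmem
    refine hr ?_
    have := Γ.N_gen_zpow_of_ne v 1 (p := (r, n)) (by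
      intro heq
      rw [Prod.mk.injEq] at heq
      exact hmem (heq.1 ▸ Subgroup.subset_closure ⟨v, hv, rfl⟩))
    simpa using this
  | one => simp [N_one] at hr
  | mul x y hx hy ihx ihy =>
    by_cases h0 : Γ.N x r n = 0
    · rw [N_mul_apply, h0, zero_add] at hr
      have := ihy _ hr
      rwa [Subgroup.mul_mem_cancel_right _ hx, Subgroup.mul_mem_cancel_left _ (inv_mem hx)] at this
    · exact ihx _ h0
  | inv x hx ih =>
    rw [N_inv_apply, neg_ne_zero] at hr
    have := ih _ hr
    rwa [Subgroup.mul_mem_cancel_right _ (inv_mem hx), Subgroup.mul_mem_cancel_left _ hx] at this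

/-! ### Lengths read off from the cocycle -/

/-- The total weight of `N g`, where residues modulo `n` are weighed by `ω n`. -/
noncomputable def weight (ω : (n : ℕ) → ZMod n → ℕ) (g : Γ.DyerGroup) : ℕ :=
  ∑ᶠ p : Γ.DyerGroup × ℕ, ω p.2 (Γ.N g p.1 p.2)

/-- The weight counting nonzero residues. -/
noncomputable def sylWt (n : ℕ) (a : ZMod n) : ℕ := if a = 0 then 0 else 1

/-- The weight measuring the smallest absolute value of a representative. -/
def wordWt (n : ℕ) (a : ZMod n) : ℕ := a.valMinAbs.natAbs

theorem sylWt_zero (n : ℕ) : sylWt n 0 = 0 := by simp [sylWt]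

theorem wordWt_zero (n : ℕ) : wordWt n 0 = 0 := by simp [wordWt]

theorem sylWt_add_le (n : ℕ) (a b : ZMod n) : sylWt n (a + b) ≤ sylWt n a + sylWt n b := by
  unfold sylWt
  split_ifs <;> simp_all

theorem wordWt_add_le (n : ℕ) (a b : ZMod n) : wordWt n (a + b) ≤ wordWt n a + wordWt n b :=
  (ZMod.natAbs_valMinAbs_add_le a b).trans (Int.natAbs_add_le _ _)

theorem wordWt_one_le (n : ℕ) : wordWt n 1 ≤ 1 := by
  unfold wordWt
  match n with
  | 0 => simp
  | 1 => simp [Subsingleton.elim (1 : ZMod 1) 0]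
  | n + 2 =>
    rw [ZMod.valMinAbs_natAbs_eq_min]
    have : Fact (1 < n + 2) := ⟨by omega⟩
    exact (min_le_left _ _).trans (by rw [ZMod.val_one])

theorem wordWt_neg (n : ℕ) (a : ZMod n) : wordWt n (-a) = wordWt n a :=
  ZMod.natAbs_valMinAbs_neg a

variable {ω : (n : ℕ) → ZMod n → ℕ}

theorem weight_finite (h0 : ∀ n, ω n 0 = 0) (g : Γ.DyerGroup) :
    (Function.support fun p : Γ.DyerGroup × ℕ => ω p.2 (Γ.N g p.1 p.2)).Finite :=
  (Γ.N_finite g).subset fun p hp hN => hp (by simp only [hN, h0])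

/-- Conjugation on the first coordinate of a wall. -/
def conjWall {G : Type*} [Group G] (g : G) : G × ℕ ≃ G × ℕ where
  toFun p := (g⁻¹ * p.1 * g, p.2)
  invFun p := (g * p.1 * g⁻¹, p.2)
  left_inv p := by ext1 <;> simp [mul_assoc]
  right_inv p := by ext1 <;> simp [mul_assoc]

theorem weight_add_eq (h0 : ∀ n, ω n 0 = 0) (g h : Γ.DyerGroup) :
    Γ.weight ω g + Γ.weight ω h = ∑ᶠ p : Γ.DyerGroup × ℕ,
      (ω p.2 (Γ.N g p.1 p.2) + ω p.2 (Γ.N h (g⁻¹ * p.1 * g) p.2)) := by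
  have hre : Γ.weight ω h = ∑ᶠ p : Γ.DyerGroup × ℕ, ω p.2 (Γ.N h (g⁻¹ * p.1 * g) p.2) :=
    (finsum_comp_equiv (conjWall g) (f := fun p => ω p.2 (Γ.N h p.1 p.2))).symm
  rw [finsum_add_distrib (Γ.weight_finite h0 g), ← hre]
  · rfl
  · exact (Γ.weight_finite h0 h).preimage (f := conjWall g) (conjWall g).injective.injOn

theorem weight_mul_le (h0 : ∀ n, ω n 0 = 0) (hadd : ∀ n a b, ω n (a + b) ≤ ω n a + ω n b)
    (g h : Γ.DyerGroup) : Γ.weight ω (g * h) ≤ Γ.weight ω g + Γ.weight ω h := by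
  rw [weight_add_eq Γ h0]
  refine finsum_le_finsum' (Γ.weight_finite h0 _) ?_ ?_
  · refine ((Γ.weight_finite h0 g).union ((Γ.weight_finite h0 h).preimage
      (f := conjWall g) (conjWall g).injective.injOn)).subset ?_
    exact Function.support_add _ _
  · intro p
    simp only [N_mul_apply]
    exact hadd _ _ _

/-- Weights are additive when no wall is crossed twice. -/
theorem weight_mul_of_disjoint (h0 : ∀ n, ω n 0 = 0) (g h : Γ.DyerGroup)
    (hd : ∀ r n, Γ.N g r n = 0 ∨ Γ.N h (g⁻¹ * r * g) n = 0) :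
    Γ.weight ω (g * h) = Γ.weight ω g + Γ.weight ω h := by
  rw [weight_add_eq Γ h0]
  refine finsum_congr fun p => ?_
  rw [N_mul_apply]
  rcases hd p.1 p.2 with h' | h' <;> simp [h', h0]

theorem weight_one (h0 : ∀ n, ω n 0 = 0) : Γ.weight ω 1 = 0 := by
  simp [weight, N_one, h0]

theorem weight_gen_zpow (h0 : ∀ n, ω n 0 = 0) (x : V) (a : ℤ) :
    Γ.weight ω (Γ.gen x ^ a) = ω (Γ.ord x) a := by
  rw [weight, finsum_eq_single _ (Γ.gen x, Γ.ord x), N_gen_zpow_self]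
  intro p hp
  rw [Γ.N_gen_zpow_of_ne x a hp, h0]

theorem weight_sylWt_le (g : Γ.DyerGroup) :
    Γ.weight sylWt g ≤ sylLength (Set.range Γ.gen) g := by
  obtain ⟨w, hl, hw, hg⟩ := exists_sylWord Γ.closure_range_gen g
  rw [← hl, ← hg]
  clear hl hg
  induction w with
  | nil => simp [Γ.weight_one sylWt_zero]
  | cons p w ih =>
    obtain ⟨⟨x, hx⟩, hw⟩ := List.forall_mem_cons.mp hw
    rw [List.map_cons, List.prod_cons, ← hx, List.length_cons, add_comm]
    refine (Γ.weight_mul_le sylWt_zero sylWt_add_le _ _).trans (add_le_add ?_ (ih hw))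
    rw [Γ.weight_gen_zpow sylWt_zero, sylWt]
    split_ifs <;> simp

theorem weight_wordWt_le (g : Γ.DyerGroup) :
    Γ.weight wordWt g ≤ wordLength (Set.range Γ.gen) g := by
  obtain ⟨w, hl, hw, hg⟩ := exists_word Γ.closure_range_gen g
  rw [← hl, ← hg]
  clear hl hg
  induction w with
  | nil => simp [Γ.weight_one wordWt_zero]
  | cons p w ih =>
    obtain ⟨hp, hw⟩ := List.forall_mem_cons.mp hw
    rw [List.prod_cons, List.length_cons, add_comm]
    refine (Γ.weight_mul_le wordWt_zero wordWt_add_le _ _).trans (add_le_add ?_ (ih hw))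
    rcases hp with ⟨x, rfl⟩ | ⟨x, hx⟩
    · have := Γ.weight_gen_zpow wordWt_zero x 1
      rw [zpow_one, Int.cast_one] at this
      exact this.trans_le (wordWt_one_le _)
    · have := Γ.weight_gen_zpow wordWt_zero x (-1)
      rw [zpow_neg_one, hx, inv_inv, Int.cast_neg, Int.cast_one, wordWt_neg] at this
      exact this.trans_le (wordWt_one_le _)

/-- The deletion property: a wall in the support of `N g` is crossed by some syllable of a minimal
expression, and a power of the corresponding rotation cancels that syllable. -/
theorem exists_deletion (g r : Γ.DyerGroup) (n : ℕ) (hr : Γ.N g r n ≠ 0) :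
    ∃ (k : ℤ) (g' : Γ.DyerGroup), g = r ^ k * g' ∧
      sylLength (Set.range Γ.gen) g' < sylLength (Set.range Γ.gen) g := by
  obtain ⟨w, hl, hw, hg⟩ := exists_sylWord Γ.closure_range_gen g
  rw [← hl]
  clear hl
  induction w generalizing g r with
  | nil =>
    rw [← hg] at hr
    simp [N_one] at hr
  | cons p w ih =>
    obtain ⟨⟨x, hx⟩, hw⟩ := List.forall_mem_cons.mp hw
    rw [List.map_cons, List.prod_cons, ← hx] at hg
    subst hg
    by_cases h : (r, n) = (Γ.gen x, Γ.ord x)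
    · rw [Prod.mk.injEq] at h
      exact ⟨p.2, _, by rw [h.1], Nat.lt_succ_of_le (sylLength_le w hw)⟩
    · rw [N_mul_apply, Γ.N_gen_zpow_of_ne x _ h, zero_add] at hr
      obtain ⟨k, g', hg', hlt⟩ := ih _ _ hr hw rfl
      refine ⟨k, Γ.gen x ^ p.2 * g', ?_, ?_⟩
      · rw [hg']
        have : (Γ.gen x ^ p.2)⁻¹ * r * Γ.gen x ^ p.2 =
            (Γ.gen x ^ p.2)⁻¹ * r * ((Γ.gen x ^ p.2)⁻¹)⁻¹ := by rw [inv_inv]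
        rw [this, conj_zpow]
        simp only [inv_inv, ← mul_assoc, mul_inv_cancel, one_mul]
      · have := sylLength_zpow_mul_le Γ.closure_range_gen ⟨x, rfl⟩ p.2 g'
        rw [List.length_cons]
        omega

/-- In a syllable-minimal expression all walls are distinct and no exponent vanishes, so the weights
of the syllables add up. -/
theorem length_le_weight (k : ℕ) (g : Γ.DyerGroup) (hk : sylLength (Set.range Γ.gen) g = k) :
    k ≤ Γ.weight sylWt g ∧ wordLength (Set.range Γ.gen) g ≤ Γ.weight wordWt g := by
  have hS := Γ.closure_range_gen
  induction k generalizing g with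
  | zero =>
    rw [eq_one_of_sylLength_eq_zero hS hk]
    have := wordLength_le (S := Set.range Γ.gen) [] (by simp)
    simp_all
  | succ k ih =>
    obtain ⟨w, hl, hw, hg⟩ := exists_sylWord hS g
    rw [hk] at hl
    obtain ⟨p, w, rfl⟩ := List.exists_cons_of_length_eq_add_one hl
    obtain ⟨⟨x, hx⟩, hw⟩ := List.forall_mem_cons.mp hw
    rw [List.map_cons, List.prod_cons, ← hx] at hg
    have hle := sylLength_le w hw
    set a := p.2
    set g' := (w.map fun p => p.1 ^ p.2).prod
    have hle2 := sylLength_zpow_mul_le hS ⟨x, rfl⟩ a g'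
    rw [List.length_cons] at hl
    rw [hg] at hle2
    have hk' : sylLength (Set.range Γ.gen) g' = k := by omega
    have ha : (a : ZMod (Γ.ord x)) ≠ 0 := by
      intro ha
      have := Γ.gen_zpow_eq_of_cast_eq x (a := a) (b := 0) (by simpa using ha)
      rw [this, zpow_zero, one_mul] at hg
      rw [hg] at hk'
      omega
    have hN : Γ.N g' (Γ.gen x) (Γ.ord x) = 0 := by
      by_contra hN
      obtain ⟨j, g'', hj, hlt⟩ := Γ.exists_deletion g' _ _ hN
      have := sylLength_zpow_mul_le hS ⟨x, rfl⟩ (a + j) g''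
      rw [zpow_add, mul_assoc, ← hj, hg] at this
      omega
    have hd : ∀ r n, Γ.N (Γ.gen x ^ a) r n = 0 ∨
        Γ.N g' ((Γ.gen x ^ a)⁻¹ * r * Γ.gen x ^ a) n = 0 := by
      intro r n
      by_cases h : (r, n) = (Γ.gen x, Γ.ord x)
      · right
        rw [Prod.mk.injEq] at h
        obtain ⟨rfl, rfl⟩ := h
        rwa [mul_assoc, ((Commute.refl (Γ.gen x)).zpow_right a).eq, inv_mul_cancel_left]
      · exact Or.inl (Γ.N_gen_zpow_of_ne x a h)
    obtain ⟨ih1, ih2⟩ := ih g' hk'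
    rw [← hg, Γ.weight_mul_of_disjoint sylWt_zero _ _ hd,
      Γ.weight_mul_of_disjoint wordWt_zero _ _ hd, Γ.weight_gen_zpow sylWt_zero,
      Γ.weight_gen_zpow wordWt_zero]
    refine ⟨by rw [sylWt, if_neg ha]; omega, ?_⟩
    refine (wordLength_mul_le hS _ _).trans (add_le_add ?_ ih2)
    rw [Γ.gen_zpow_eq_of_cast_eq x (b := (a : ZMod (Γ.ord x)).valMinAbs) (by simp)]
    exact wordLength_zpow_le (Set.mem_range_self x) _

theorem sylLength_eq (g : Γ.DyerGroup) :
    sylLength (Set.range Γ.gen) g = Γ.weight sylWt g :=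
  le_antisymm (Γ.length_le_weight _ g rfl).1 (Γ.weight_sylWt_le g)

theorem wordLength_eq (g : Γ.DyerGroup) :
    wordLength (Set.range Γ.gen) g = Γ.weight wordWt g :=
  le_antisymm (Γ.length_le_weight _ g rfl).2 (Γ.weight_wordWt_le g)

end DyerGraph

/-! ### Minimal coset representatives -/

/-- In each right coset `D_X g` there is a unique element `g₀'` such that
`l_sy(h g₀') = l_sy(h) + l_sy(g₀')` and `l(h g₀') = l(h) + l(g₀')` for all `h ∈ D_X`. -/
theorem exists_unique_right_coset_min
    {V : Type} [Fintype V] (Γ : DyerGraph V) (X : Set V) (g : Γ.DyerGroup) :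
    ∃! g₀' : Γ.DyerGroup, (∃ h ∈ Γ.parabolic X, g₀' = h * g) ∧
      ∀ h ∈ Γ.parabolic X,
        sylLength (Set.range Γ.gen) (h * g₀') =
          sylLength (Set.range Γ.gen) h + sylLength (Set.range Γ.gen) g₀' ∧
        wordLength (Set.range Γ.gen) (h * g₀') =
          wordLength (Set.range Γ.gen) h + wordLength (Set.range Γ.gen) g₀' := by
  let len : Γ.parabolic X → ℕ := fun h => sylLength (Set.range Γ.gen) (h * g)
  -- `h₀ * g` has least syllable length in the coset
  obtain ⟨h₀, hmin⟩ : ∃ h₀, ∀ h, len h₀ ≤ len h :=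
    ⟨Function.argmin len, fun h => Function.argmin_le len h⟩
  have havoid : ∀ r ∈ Γ.parabolic X, ∀ n, Γ.N (h₀ * g) r n = 0 := by
    intro r hr n
    by_contra hN
    obtain ⟨k, g', hg', hlt⟩ := Γ.exists_deletion _ r n hN
    have := hmin ⟨r ^ (-k) * h₀, mul_mem (zpow_mem hr _) h₀.2⟩
    simp only [len, mul_assoc] at this
    rw [hg', ← mul_assoc, ← zpow_add, neg_add_cancel, zpow_zero, one_mul, ← hg'] at this
    omega
  refine ⟨h₀ * g, ⟨⟨h₀, h₀.2, rfl⟩, fun h hh => ?_⟩, ?_⟩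
  · have hd : ∀ r n, Γ.N h r n = 0 ∨ Γ.N (h₀ * g) (h⁻¹ * r * h) n = 0 := by
      intro r n
      by_cases hr : Γ.N h r n = 0
      · exact Or.inl hr
      · exact Or.inr (havoid _ (mul_mem (mul_mem (inv_mem hh) (Γ.N_parabolic hh r n hr)) hh) n)
    simp only [Γ.sylLength_eq, Γ.wordLength_eq]
    exact ⟨Γ.weight_mul_of_disjoint DyerGraph.sylWt_zero _ _ hd,
      Γ.weight_mul_of_disjoint DyerGraph.wordWt_zero _ _ hd⟩
  · rintro g₁ ⟨⟨h₁, hh₁, rfl⟩, hadd⟩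
    -- minimality of `h₀ * g` forces the element relating the two representatives to be trivial
    have h1 := (hadd (h₀ * h₁⁻¹) (mul_mem h₀.2 (inv_mem hh₁))).1
    rw [← mul_assoc, inv_mul_cancel_right] at h1
    have h2 := hmin ⟨h₁, hh₁⟩
    simp only [len] at h2
    have h3 := eq_one_of_sylLength_eq_zero (g := h₀ * h₁⁻¹) Γ.closure_range_gen (by omega)
    rw [mul_inv_eq_one.mp h3]
end

section
/- Let (Γ,m,f) be a Dyer graph with associated Dyer system (D,V). Then for every X ⊆ V, the pair (D_X, X) is admissible in (D,V). -/
/-!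
The proof adapts the reflection cocycle of Coxeter groups. Write `D` for the Dyer group. There is
a crossed homomorphism `N : D → (D → D)`, i.e. `N(gh)(r) = N(g)(r) · g N(h)(g⁻¹rg) g⁻¹`, with `N(x)`
equal to `x` at `x` and to `1` elsewhere for each generator `x`. It exists because the generator
images `(N(x), x)` in the semidirect product `(D → D) ⋊ D` satisfy the defining relations; the
braid relations hold because both sides list the same reflections in opposite orders
(`braid_lift`).

Deleting from a word `w` all letters that contribute to `N(w)(t)` divides the value of `w` by
`N(w)(t)` (`deletion`). Hence, in a shortest `X`-word for `h ∈ D_X`, the first letter `x^{±1}`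
has `N(h)(x) ≠ 1`. So `N(h) = 1` forces `h = 1`, and if `N(h)` is trivial off `r` and `h ≠ 1`, then
`r ∈ X`.

Let `U` be the set of `u` such that `N(u)` is trivial on all `D_X`-conjugates of elements of `X`.
The two facts above show that a coset of `D_X` meets `U` at most once (`transv_unique`), and
that for `u ∈ U` and a letter `a` either `ua ∈ U` or `ua = bu` with a letter `b` from `X^{±1}`
(`deodhar`). Reading a word for `g` from left to right, each letter is thus absorbed either into
the `U`-part or into the `D_X`-part, so the word splits into an `X`-word for `h` and a word for
`u`, where `g = hu`, of the same total length (`word_split`). This gives both the existence of the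
factorization and `l_V(hu) ≥ l_X(h) + l_V(u)`; the reverse inequality is concatenation of words.
-/

open scoped Classical

/-- `(L, T)` is admissible in `(H, S)` (all living inside an ambient group `G`):
`L ≤ H`, `T ⊆ S`, and there is a transversal `U ⊆ H` for `L` in `H` containing `1` such
that every `g ∈ H` factors uniquely as `g = h * u` with `h ∈ L`, `u ∈ U`, and for such
factorizations `l_S(h * u) = l_T(h) + l_S(u)`. -/
def Admissible {G : Type*} [Group G] (Hgrp : Subgroup G) (S : Set G)
    (Lgrp : Subgroup G) (T : Set G) : Prop :=
  Lgrp ≤ Hgrp ∧ T ⊆ S ∧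
  ∃ U : Set G, U ⊆ (Hgrp : Set G) ∧ (1 : G) ∈ U ∧
    (∀ g ∈ Hgrp, ∃! p : G × G, p.1 ∈ Lgrp ∧ p.2 ∈ U ∧ p.1 * p.2 = g) ∧
    ∀ h ∈ Lgrp, ∀ u ∈ U,
      wordLength S (h * u) = wordLength T h + wordLength S u

/-! ### The cocycle -/

namespace DyerGraph

/-- The alternating product `abab⋯` of length `n` in an arbitrary monoid. -/
def altProd {M : Type*} [Monoid M] (a b : M) : ℕ → M
  | 0 => 1
  | n + 1 => a * altProd b a n

theorem lift_altWord {V G : Type*} [Group G] (φ : V → G) (n : ℕ) :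
    ∀ x y : V, FreeGroup.lift φ (altWord x y n) = altProd (φ x) (φ y) n := by
  induction n with
  | zero => intro x y; simp [altWord, altProd]
  | succ n ih => intro x y; simp [altWord, altProd, ih]

theorem altProd_two_mul {G : Type*} [Group G] (a b : G) (k : ℕ) :
    altProd a b (2 * k) = (a * b) ^ k ∧ altProd a b (2 * k + 1) = (a * b) ^ k * a := by
  induction k generalizing a b with
  | zero => simp [altProd]
  | succ k ih =>
    have e : altProd a b (2 * (k + 1)) = (a * b) ^ (k + 1) := by
      change a * (b * altProd a b (2 * k)) = _
      rw [(ih a b).1, pow_succ', mul_assoc]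
    refine ⟨e, ?_⟩
    change a * (b * altProd a b (2 * k + 1)) = _
    rw [(ih a b).2, pow_succ']
    simp only [mul_assoc]

theorem mul_pow_eq_one_of_altProd {G : Type*} [Group G] {a b : G} (ha : a * a = 1)
    (hb : b * b = 1) {n : ℕ} (h : altProd a b n = altProd b a n) : (a * b) ^ n = 1 := by
  have hinv : b * a = (a * b)⁻¹ := by
    rw [mul_inv_rev, ← eq_inv_of_mul_eq_one_left ha, ← eq_inv_of_mul_eq_one_left hb]
  rcases Nat.even_or_odd' n with ⟨k, rfl | rfl⟩
  · rw [(altProd_two_mul a b k).1, (altProd_two_mul b a k).1, hinv, inv_pow] at h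
    rw [two_mul, pow_add]
    nth_rewrite 1 [h]
    simp
  · rw [(altProd_two_mul a b k).2, (altProd_two_mul b a k).2, hinv, inv_pow] at h
    have h2 : (a * b) ^ k * (a * b) = ((a * b) ^ k)⁻¹ := by
      rw [← mul_assoc, h, mul_assoc, hb, mul_one]
    rw [show 2 * k + 1 = (k + 1) + k by ring, pow_add, pow_succ, h2, inv_mul_cancel]

/-- The action of a group `G` on functions `G → G` given by
`(g • φ) r = g * φ (g⁻¹ * r * g) * g⁻¹`. -/
def conjAct (G : Type*) [Group G] : G →* MulAut (G → G) where
  toFun g :=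
    { toFun := fun φ r => g * φ (g⁻¹ * r * g) * g⁻¹
      invFun := fun φ r => g⁻¹ * φ (g * r * g⁻¹) * g
      left_inv := fun φ => by funext r; simp [mul_assoc]
      right_inv := fun φ => by funext r; simp [mul_assoc]
      map_mul' := fun φ ψ => by funext r; simp [mul_assoc] }
  map_one' := by ext φ r; simp
  map_mul' g h := by ext φ r; simp [mul_assoc]

@[simp]
theorem conjAct_apply {G : Type*} [Group G] (g : G) (φ : G → G) (r : G) :
    conjAct G g φ r = g * φ (g⁻¹ * r * g) * g⁻¹ := rfl

/-- The semidirect product `(G → G) ⋊ G`; homomorphic sections of its projection to `G` are the same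
as crossed homomorphisms `G → (G → G)`. -/
abbrev CocycleGroup (G : Type*) [Group G] := (G → G) ⋊[conjAct G] G

/-- The function `G → G` with value `x` at `x` and `1` elsewhere. -/
noncomputable def pt {G : Type*} [Group G] (x : G) : G → G := fun r => if r = x then x else 1

/-- The element `(pt x, x)` of the semidirect product, image of a generator `x`. -/
noncomputable def ptElt {G : Type*} [Group G] (x : G) : CocycleGroup G := ⟨pt x, x⟩

theorem conj_eq_iff {G : Type*} [Group G] (x r t : G) :
    x⁻¹ * r * x = t ↔ r = x * t * x⁻¹ := by
  constructor <;> rintro rfl <;> group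

theorem conjAct_pt {G : Type*} [Group G] (g x : G) :
    conjAct G g (pt x) = pt (g * x * g⁻¹) := by
  funext r
  simp only [conjAct_apply, pt, conj_eq_iff]
  split_ifs <;> simp

theorem ptElt_pow {G : Type*} [Group G] (x : G) (n : ℕ) :
    ptElt x ^ n = ⟨pt x ^ n, x ^ n⟩ := by
  induction n with
  | zero => rw [pow_zero, pow_zero, pow_zero]; rfl
  | succ n ih =>
    rw [pow_succ', ih]
    ext r
    · have : conjAct G x (pt x) = pt x := by rw [conjAct_pt]; simp
      simp only [ptElt, SemidirectProduct.mul_left, map_pow, this, pow_succ']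
    · simp only [ptElt, SemidirectProduct.mul_right, pow_succ']

theorem altProd_right {G : Type*} [Group G] (n : ℕ) :
    ∀ x y : G, (altProd (ptElt x) (ptElt y) n).right = altProd x y n := by
  induction n with
  | zero => intro x y; rfl
  | succ n ih => intro x y; rw [altProd, SemidirectProduct.mul_right, ih]; rfl

/-- For involutions `x`, `y`, the function component of an alternating product counts how often
`r` occurs among the reflections `(xy)^i x`. -/
theorem altProd_left {G : Type*} [Group G] (n : ℕ) :
    ∀ x y : G, x * x = 1 → y * y = 1 → ∀ r, (altProd (ptElt x) (ptElt y) n).left r =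
      r ^ (∑ i ∈ Finset.range n, if r = (x * y) ^ i * x then 1 else 0) := by
  induction n with
  | zero => intro x y _ _ r; simp [altProd]
  | succ n ih =>
    intro x y hx hy r
    have hxi : x⁻¹ = x := inv_eq_of_mul_eq_one_left hx
    have key : ∀ i, x * ((y * x) ^ i * y) * x⁻¹ = (x * y) ^ (i + 1) * x := by
      intro i
      rw [hxi]
      induction i with
      | zero => simp
      | succ i ihi =>
        rw [pow_succ', pow_succ' (x * y) (i + 1), mul_assoc (x * y), ← ihi]
        simp only [mul_assoc]
    rw [Finset.sum_range_succ']
    simp only [altProd, SemidirectProduct.mul_left, Pi.mul_apply, conjAct_apply]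
    rw [show (ptElt x).right = x from rfl, show (ptElt x).left = pt x from rfl, ih y x hy hx]
    simp only [conj_eq_iff, key]
    have hc : ∀ c : ℕ, x * (x⁻¹ * r * x) ^ c * x⁻¹ = r ^ c := by
      intro c
      have := conj_pow (i := c) (a := x⁻¹) (b := r)
      rw [inv_inv] at this
      rw [this]; group
    rw [hc, add_comm, pow_add]
    congr 1
    simp only [pt, pow_zero, one_mul]
    split_ifs with h <;> simp [h]

/-- The braid relation of length `n` between two involutions lifts to the semidirect product:
both sides list the same `n` reflections, in opposite orders. -/
theorem braid_lift {G : Type*} [Group G] {x y : G} (hx : x * x = 1) (hy : y * y = 1) {n : ℕ}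
    (h : altProd x y n = altProd y x n) :
    altProd (ptElt x) (ptElt y) n = altProd (ptElt y) (ptElt x) n := by
  have hxy := mul_pow_eq_one_of_altProd hx hy h
  have hinv : y * x = (x * y)⁻¹ := by
    rw [mul_inv_rev, ← eq_inv_of_mul_eq_one_left hx, ← eq_inv_of_mul_eq_one_left hy]
  ext r
  · rw [altProd_left n x y hx hy, altProd_left n y x hy hx,
      ← Finset.sum_range_reflect (fun i => if r = (y * x) ^ i * y then 1 else 0)]
    congr 1
    refine Finset.sum_congr rfl fun i hi => ?_
    have hi' := Finset.mem_range.1 hi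
    have : (y * x) ^ (n - 1 - i) * y = (x * y) ^ i * x := by
      have e : (x * y) ^ i * x * y * (x * y) ^ (n - 1 - i) = 1 := by
        rw [mul_assoc _ x y, ← pow_succ, ← pow_add, ← hxy]
        congr 1
        omega
      rw [hinv, inv_pow, ← eq_inv_of_mul_eq_one_left e, mul_assoc, hy, mul_one]
    rw [this]
  · rw [altProd_right, altProd_right, h]

variable {V : Type*} (Γ : DyerGraph V)

theorem gen_eq_lift (w : FreeGroup V) :
    (QuotientGroup.mk w : Γ.DyerGroup) = FreeGroup.lift Γ.gen w := by
  have : PresentedGroup.mk Γ.rels = FreeGroup.lift Γ.gen := by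
    ext x; simp [gen, PresentedGroup.of]
  exact DFunLike.congr_fun this w

theorem gen_rel {w : FreeGroup V} (hw : w ∈ Γ.rels) : FreeGroup.lift Γ.gen w = 1 := by
  rw [← gen_eq_lift]
  exact PresentedGroup.one_of_mem hw

theorem gen_pow (x : V) (hx : Γ.f x ≠ ⊤) : Γ.gen x ^ (Γ.f x).toNat = 1 := by
  have := Γ.gen_rel (Or.inl ⟨x, hx, rfl⟩)
  simpa using this

theorem gen_braid {x y : V} (h : Γ.Adj x y) :
    altProd (Γ.gen x) (Γ.gen y) (Γ.m x y) = altProd (Γ.gen y) (Γ.gen x) (Γ.m x y) := by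
  have := Γ.gen_rel (Or.inr ⟨x, y, h, rfl⟩)
  rwa [map_mul, map_inv, lift_altWord, lift_altWord, mul_inv_eq_one] at this

theorem cocycle_rels : ∀ w ∈ Γ.rels, FreeGroup.lift (fun x => ptElt (Γ.gen x)) w = 1 := by
  rintro w (⟨x, hx, rfl⟩ | ⟨x, y, h, rfl⟩)
  · have hp := Γ.gen_pow x hx
    rw [map_pow, FreeGroup.lift_apply_of, ptElt_pow]
    ext r
    · simp only [Pi.pow_apply, pt, SemidirectProduct.one_left, Pi.one_apply]
      split_ifs <;> simp [hp]
    · simpa using hp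
  · rw [map_mul, map_inv, lift_altWord, lift_altWord, mul_inv_eq_one]
    have hb := Γ.gen_braid h
    by_cases hm : Γ.m x y = 2
    · rw [hm] at hb ⊢
      simp only [altProd, mul_one] at hb ⊢
      -- If `x` and `y` commute then so do `(pt x, x)` and `(pt y, y)`, whatever the orders.
      have h1 : Γ.gen x * Γ.gen y * (Γ.gen x)⁻¹ = Γ.gen y := by rw [hb]; group
      have h2 : Γ.gen y * Γ.gen x * (Γ.gen y)⁻¹ = Γ.gen x := by rw [← hb]; group
      ext r
      · simp only [ptElt, SemidirectProduct.mul_left, conjAct_pt, h1, h2, Pi.mul_apply, pt]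
        split_ifs <;> simp [hb]
      · simpa [ptElt] using hb
    · obtain ⟨fx, fy⟩ := Γ.compat h hm
      refine braid_lift ?_ ?_ hb
      · have := Γ.gen_pow x (by rw [fx]; decide)
        rw [fx] at this
        simpa [sq] using this
      · have := Γ.gen_pow y (by rw [fy]; decide)
        rw [fy] at this
        simpa [sq] using this

/-- The homomorphism from the Dyer group to the semidirect product sending each generator `x`
to `(pt x, x)`. -/
noncomputable def cocycleHom : Γ.DyerGroup →* CocycleGroup Γ.DyerGroup :=
  PresentedGroup.toGroup Γ.cocycle_rels

/-- The cocycle `N`: if `g = s₁⋯sₙ` with letters `sᵢ = vᵢ^{εᵢ}`, then `N g r = r ^ k`, where `k` is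
the sum of the `εᵢ` over those `i` with `(s₁⋯sᵢ₋₁) vᵢ (s₁⋯sᵢ₋₁)⁻¹ = r`. -/
noncomputable def coc (g : Γ.DyerGroup) : Γ.DyerGroup → Γ.DyerGroup := (Γ.cocycleHom g).left

theorem cocycleHom_gen (x : V) : Γ.cocycleHom (Γ.gen x) = ptElt (Γ.gen x) := by
  simp [cocycleHom, gen]

theorem cocycleHom_right (g : Γ.DyerGroup) : (Γ.cocycleHom g).right = g := by
  have : SemidirectProduct.rightHom.comp Γ.cocycleHom = MonoidHom.id Γ.DyerGroup := by
    apply PresentedGroup.ext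
    intro x
    have := Γ.cocycleHom_gen x
    simp only [gen] at this
    simp [this, ptElt]
  exact DFunLike.congr_fun this g

theorem coc_one (r : Γ.DyerGroup) : Γ.coc 1 r = 1 := by simp [coc]

theorem coc_mul (g h r : Γ.DyerGroup) :
    Γ.coc (g * h) r = Γ.coc g r * (g * Γ.coc h (g⁻¹ * r * g) * g⁻¹) := by
  simp [coc, cocycleHom_right]

/-- `a` is the generator `x` or its inverse. -/
def IsLetter (x a : Γ.DyerGroup) : Prop := a = x ∨ a = x⁻¹

theorem coc_letter {x : V} {a : Γ.DyerGroup} (ha : Γ.IsLetter (Γ.gen x) a) (r : Γ.DyerGroup) :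
    Γ.coc a r = if r = Γ.gen x then a else 1 := by
  have h1 : ∀ r, Γ.coc (Γ.gen x) r = if r = Γ.gen x then Γ.gen x else 1 := by
    intro r; rw [coc, cocycleHom_gen]; rfl
  rcases ha with rfl | rfl
  · exact h1 r
  · have h2 := Γ.coc_mul (Γ.gen x)⁻¹ (Γ.gen x) r
    rw [inv_mul_cancel, coc_one, h1] at h2
    have hr : (Γ.gen x)⁻¹⁻¹ * r * (Γ.gen x)⁻¹ = Γ.gen x ↔ r = Γ.gen x := by
      rw [inv_inv, mul_inv_eq_iff_eq_mul, mul_right_inj]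
    simp only [hr] at h2
    split_ifs at h2 ⊢ with h
    · simpa using (eq_inv_of_mul_eq_one_left h2.symm)
    · simpa using h2.symm

/-! ### Words and deletion -/

/-- `w` is a word in the letters `x^{±1}`, `x ∈ X`. -/
def IsWord (X : Set V) (w : List Γ.DyerGroup) : Prop :=
  ∀ a ∈ w, a ∈ Γ.gen '' X ∪ (Γ.gen '' X)⁻¹

variable {Γ} {X : Set V}

theorem exists_letter {a : Γ.DyerGroup} :
    a ∈ Γ.gen '' X ∪ (Γ.gen '' X)⁻¹ ↔ ∃ x ∈ X, Γ.IsLetter (Γ.gen x) a := by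
  constructor
  · rintro (⟨x, hx, rfl⟩ | ⟨x, hx, h⟩)
    · exact ⟨x, hx, Or.inl rfl⟩
    · exact ⟨x, hx, Or.inr (by rw [h, inv_inv])⟩
  · rintro ⟨x, hx, rfl | rfl⟩
    · exact Or.inl ⟨x, hx, rfl⟩
    · exact Or.inr ⟨x, hx, by simp⟩

theorem exists_word {h : Γ.DyerGroup} (hh : h ∈ Γ.parabolic X) :
    ∃ w, Γ.IsWord X w ∧ w.prod = h := by
  rw [parabolic, ← Subgroup.mem_toSubmonoid, Subgroup.closure_toSubmonoid] at hh
  obtain ⟨w, hw, hp⟩ := Submonoid.exists_list_of_mem_closure hh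
  exact ⟨w, hw, hp⟩

theorem IsWord.prod_mem {w : List Γ.DyerGroup} (hw : Γ.IsWord X w) :
    w.prod ∈ Γ.parabolic X := by
  apply Subgroup.list_prod_mem
  intro a ha
  obtain ⟨x, hx, rfl | rfl⟩ := exists_letter.1 (hw a ha)
  · exact Subgroup.subset_closure ⟨x, hx, rfl⟩
  · exact inv_mem (Subgroup.subset_closure ⟨x, hx, rfl⟩)

theorem parabolic_univ : Γ.parabolic Set.univ = ⊤ := by
  rw [parabolic, Set.image_univ]
  exact PresentedGroup.closure_range_of Γ.rels

theorem coc_mem_zpowers (g r : Γ.DyerGroup) : Γ.coc g r ∈ Subgroup.zpowers r := by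
  obtain ⟨w, hw, rfl⟩ := exists_word (X := Set.univ) (h := g) (by rw [parabolic_univ]; trivial)
  induction w generalizing r with
  | nil => simp [coc_one]
  | cons a w ih =>
    rw [List.prod_cons, coc_mul]
    obtain ⟨x, -, hx⟩ := exists_letter.1 (hw a (by simp))
    refine mul_mem ?_ ?_
    · rw [Γ.coc_letter hx]
      split_ifs with h
      · rcases hx with rfl | rfl <;> rw [h] <;> simp
      · exact one_mem _
    · obtain ⟨k, hk⟩ := ih (a⁻¹ * r * a) (fun b hb => hw b (by simp [hb]))
      refine ⟨k, ?_⟩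
      simp only at hk ⊢
      rw [← hk]
      have := conj_zpow (i := k) (a := a⁻¹) (b := r)
      rw [inv_inv] at this
      rw [this]; group

/-- Deleting from a word every letter that contributes to `N(·)(t)` divides its value by
`N(w)(t)` on the left. -/
theorem deletion (w : List Γ.DyerGroup) : ∀ (_ : Γ.IsWord X w) (t : Γ.DyerGroup),
    ∃ w', Γ.IsWord X w' ∧ w'.length ≤ w.length ∧ w.prod = Γ.coc w.prod t * w'.prod := by
  induction w with
  | nil => intro hw t; exact ⟨[], hw, le_rfl, by simp [coc_one]⟩
  | cons a w ih =>
    intro hw t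
    have hw0 : Γ.IsWord X w := fun b hb => hw b (by simp [hb])
    obtain ⟨x, hxX, hx⟩ := exists_letter.1 (hw a (by simp))
    obtain ⟨w', hw', hl, hp⟩ := ih hw0 (a⁻¹ * t * a)
    by_cases ht : t = Γ.gen x
    · refine ⟨w', hw', hl.trans (by simp), ?_⟩
      have hc : a⁻¹ * t * a = t := by rw [ht]; rcases hx with rfl | rfl <;> group
      have hcomm : Commute a (Γ.coc w.prod t) := by
        obtain ⟨k, hk⟩ := coc_mem_zpowers w.prod t
        simp only at hk
        rw [← hk, ht]
        apply Commute.zpow_right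
        rcases hx with rfl | rfl
        · exact Commute.refl _
        · exact (Commute.refl _).inv_left
      rw [hc] at hp
      rw [List.prod_cons, coc_mul, hc, Γ.coc_letter hx, if_pos ht, hcomm.eq,
        mul_inv_cancel_right, mul_assoc, ← hp]
    · refine ⟨a :: w', ?_, by simpa using hl, ?_⟩
      · intro b hb
        rcases List.mem_cons.1 hb with rfl | hb
        · exact hw b (by simp)
        · exact hw' b hb
      · rw [List.prod_cons, List.prod_cons, coc_mul, Γ.coc_letter hx, if_neg ht, one_mul]
        nth_rewrite 1 [hp]
        group

/-- If the first letter of `w` is `x^{±1}` and `N(w)(x) = 1`, then `w` can be shortened. -/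
theorem deletion_head {a : Γ.DyerGroup} {w : List Γ.DyerGroup} (hw : Γ.IsWord X (a :: w))
    {x : V} (hx : Γ.IsLetter (Γ.gen x) a) (h1 : Γ.coc (a :: w).prod (Γ.gen x) = 1) :
    ∃ w', Γ.IsWord X w' ∧ w'.length < (a :: w).length ∧ w'.prod = (a :: w).prod := by
  have hw0 : Γ.IsWord X w := fun b hb => hw b (by simp [hb])
  obtain ⟨w', hw', hl, hp⟩ := deletion w hw0 (Γ.gen x)
  refine ⟨w', hw', by simp; omega, ?_⟩
  have hc : a⁻¹ * Γ.gen x * a = Γ.gen x := by rcases hx with rfl | rfl <;> group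
  rw [List.prod_cons, coc_mul, hc, Γ.coc_letter hx, if_pos rfl] at h1
  have h2 : a * Γ.coc w.prod (Γ.gen x) = 1 := by
    have := eq_inv_of_mul_eq_one_right h1
    rw [mul_inv_eq_iff_eq_mul, inv_mul_cancel] at this
    exact this
  rw [List.prod_cons, hp, ← mul_assoc, h2, one_mul]

theorem exists_min_word {h : Γ.DyerGroup} (hh : h ∈ Γ.parabolic X) :
    ∃ w, Γ.IsWord X w ∧ w.prod = h ∧
      ∀ w', Γ.IsWord X w' → w'.prod = h → w.length ≤ w'.length := by
  have hne : {w | Γ.IsWord X w ∧ w.prod = h}.Nonempty := exists_word hh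
  obtain ⟨w, ⟨hw, hp⟩, hm⟩ := WellFounded.wellFounded_iff_has_min.1
    (measure (fun w : List Γ.DyerGroup => w.length)).wf _ hne
  exact ⟨w, hw, hp, fun w' h1 h2 => not_lt.1 (hm w' ⟨h1, h2⟩)⟩

/-- If `h ∈ D_X` and `N(h)` is trivial off `r`, then `h = 1` or `r ∈ X`. -/
theorem eq_one_or_mem {h r : Γ.DyerGroup} (hh : h ∈ Γ.parabolic X)
    (hN : ∀ t, t ≠ r → Γ.coc h t = 1) : h = 1 ∨ r ∈ Γ.gen '' X := by
  obtain ⟨w, hw, hp, hm⟩ := exists_min_word hh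
  cases w with
  | nil => exact Or.inl (by simpa using hp.symm)
  | cons a w =>
    obtain ⟨x, hxX, hx⟩ := exists_letter.1 (hw a (by simp))
    by_cases hr : Γ.gen x = r
    · exact Or.inr ⟨x, hxX, hr⟩
    · obtain ⟨w', hw', hl, hp'⟩ := deletion_head hw hx (by rw [hp]; exact hN _ hr)
      have := hm w' hw' (hp'.trans hp)
      omega

theorem eq_one_of_coc {h : Γ.DyerGroup} (hh : h ∈ Γ.parabolic X)
    (hN : ∀ t, Γ.coc h t = 1) : h = 1 := by
  obtain ⟨w, hw, hp, hm⟩ := exists_min_word hh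
  cases w with
  | nil => simpa using hp.symm
  | cons a w =>
    obtain ⟨x, hxX, hx⟩ := exists_letter.1 (hw a (by simp))
    obtain ⟨w', hw', hl, hp'⟩ := deletion_head hw hx (by rw [hp]; exact hN _)
    have := hm w' hw' (hp'.trans hp)
    omega

/-! ### The transversal -/

variable (Γ X) in
/-- The `D_X`-conjugates of the generators in `X`. -/
def reflX : Set Γ.DyerGroup := {r | ∃ h ∈ Γ.parabolic X, ∃ x ∈ X, r = h * Γ.gen x * h⁻¹}

theorem reflX_conj {h r : Γ.DyerGroup} (hh : h ∈ Γ.parabolic X) (hr : r ∈ Γ.reflX X) :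
    h * r * h⁻¹ ∈ Γ.reflX X := by
  obtain ⟨k, hk, x, hx, rfl⟩ := hr
  exact ⟨h * k, mul_mem hh hk, x, hx, by group⟩

theorem reflX_sub {r : Γ.DyerGroup} (hr : r ∈ Γ.reflX X) : r ∈ Γ.parabolic X := by
  obtain ⟨k, hk, x, hx, rfl⟩ := hr
  exact mul_mem (mul_mem hk (Subgroup.subset_closure ⟨x, hx, rfl⟩)) (inv_mem hk)

theorem coc_support {h : Γ.DyerGroup} (hh : h ∈ Γ.parabolic X) {t : Γ.DyerGroup}
    (ht : t ∉ Γ.reflX X) : Γ.coc h t = 1 := by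
  obtain ⟨w, hw, rfl⟩ := exists_word hh
  clear hh
  induction w generalizing t with
  | nil => simp [coc_one]
  | cons a w ih =>
    obtain ⟨x, hxX, hx⟩ := exists_letter.1 (hw a (by simp))
    have ha : a ∈ Γ.parabolic X := by
      have : Γ.IsWord X [a] := fun b hb => hw b (by simp_all)
      simpa using this.prod_mem
    rw [List.prod_cons, coc_mul, Γ.coc_letter hx, if_neg, ih]
    · group
    · intro h
      apply ht
      have := reflX_conj ha h
      convert this using 1
      group
    · exact fun b hb => hw b (by simp [hb])
    · rintro rfl
      exact ht ⟨1, one_mem _, x, hxX, by simp⟩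

variable (Γ X) in
/-- The transversal: elements whose cocycle is trivial on all `D_X`-conjugates of `X`. -/
def transv : Set Γ.DyerGroup := {u | ∀ r ∈ Γ.reflX X, Γ.coc u r = 1}

theorem one_mem_transv : (1 : Γ.DyerGroup) ∈ Γ.transv X := fun r _ => Γ.coc_one r

theorem coc_mul_transv {h u t : Γ.DyerGroup} (hh : h ∈ Γ.parabolic X) (hu : u ∈ Γ.transv X)
    (ht : t ∈ Γ.reflX X) : Γ.coc (h * u) t = Γ.coc h t := by
  rw [coc_mul, hu]
  · group
  · have := reflX_conj (inv_mem hh) ht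
    rwa [inv_inv] at this

theorem transv_unique {h u u' : Γ.DyerGroup} (hh : h ∈ Γ.parabolic X) (hu : u ∈ Γ.transv X)
    (hu' : u' ∈ Γ.transv X) (e : h * u = u') : h = 1 := by
  refine eq_one_of_coc hh fun t => ?_
  by_cases ht : t ∈ Γ.reflX X
  · rw [← coc_mul_transv hh hu ht, e]
    exact hu' t ht
  · exact coc_support hh ht

/-- Deodhar's lemma: right multiplication of `u` in the transversal by a letter either stays in
the transversal or amounts to left multiplication by a letter from `X`. -/
theorem deodhar {u a : Γ.DyerGroup} (hu : u ∈ Γ.transv X) {v : V}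
    (ha : Γ.IsLetter (Γ.gen v) a) :
    u * a ∈ Γ.transv X ∨ ∃ b ∈ Γ.gen '' X ∪ (Γ.gen '' X)⁻¹, u * a = b * u := by
  have hN : ∀ b, Γ.IsLetter (Γ.gen v) b → ∀ t, t ∈ Γ.reflX X → t ≠ u * Γ.gen v * u⁻¹ →
      Γ.coc (u * b) t = 1 := by
    intro b hb t ht hne
    rw [coc_mul, hu t ht, Γ.coc_letter hb, if_neg]
    · group
    · rwa [conj_eq_iff]
  by_cases hr : u * Γ.gen v * u⁻¹ ∈ Γ.reflX X
  · have hsupp : ∀ t, t ≠ u * Γ.gen v * u⁻¹ → Γ.coc (u * Γ.gen v * u⁻¹) t = 1 := by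
      intro t hne
      by_cases ht : t ∈ Γ.reflX X
      · rw [← coc_mul_transv (reflX_sub hr) hu ht, inv_mul_cancel_right]
        exact hN _ (Or.inl rfl) t ht hne
      · exact coc_support (reflX_sub hr) ht
    rcases eq_one_or_mem (reflX_sub hr) hsupp with h | ⟨x, hx, h⟩
    -- No appeal is made to `gen v ≠ 1`: if `gen v = 1` then `u * a = u`.
    · left
      have hv : Γ.gen v = 1 := by
        have := mul_inv_eq_one.1 h
        simpa using this
      have : a = 1 := by rcases ha with rfl | rfl <;> simp [hv]
      rwa [this, mul_one]
    · right
      refine ⟨u * a * u⁻¹, exists_letter.2 ⟨x, hx, ?_⟩, by group⟩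
      rw [h]
      rcases ha with rfl | rfl
      · exact Or.inl rfl
      · exact Or.inr (by group)
  · left
    intro t ht
    exact hN a ha t ht (fun e => hr (e ▸ ht))

/-- Every word for `g` splits into an `X`-word and a word for the transversal representative,
of the same total length. -/
theorem word_split (w : List Γ.DyerGroup) : Γ.IsWord Set.univ w →
    ∃ w₁ w₂, Γ.IsWord X w₁ ∧ Γ.IsWord Set.univ w₂ ∧ w₂.prod ∈ Γ.transv X ∧
      w₁.prod * w₂.prod = w.prod ∧ w₁.length + w₂.length = w.length := by
  induction w using List.reverseRecOn with
  | nil =>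
    intro hw
    exact ⟨[], [], fun a ha => by simp at ha, hw, one_mem_transv, by simp, rfl⟩
  | append_singleton w a ih =>
    intro hw
    obtain ⟨w₁, w₂, h1, h2, hu, hp, hl⟩ := ih (fun b hb => hw b (by simp [hb]))
    have haw := hw a (by simp)
    obtain ⟨v, -, hv⟩ := exists_letter.1 haw
    rcases deodhar hu hv with h | ⟨b, hb, h⟩
    · refine ⟨w₁, w₂ ++ [a], h1, ?_, by simpa using h, by simp [← hp, mul_assoc],
        by simp; omega⟩
      intro c hc
      rcases List.mem_append.1 hc with hc | hc
      · exact h2 c hc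
      · rw [List.mem_singleton.1 hc]; exact haw
    · refine ⟨w₁ ++ [b], w₂, ?_, h2, hu, by simp [← hp, mul_assoc, h], by simp; omega⟩
      intro c hc
      rcases List.mem_append.1 hc with hc | hc
      · exact h1 c hc
      · rw [List.mem_singleton.1 hc]; exact hb

theorem wordLength_le {w : List Γ.DyerGroup} (hw : Γ.IsWord X w) :
    wordLength (Γ.gen '' X) w.prod ≤ w.length :=
  Nat.sInf_le ⟨w, rfl, hw, rfl⟩

theorem wordLength_attained {h : Γ.DyerGroup} (hh : h ∈ Γ.parabolic X) :
    ∃ w, Γ.IsWord X w ∧ w.prod = h ∧ w.length = wordLength (Γ.gen '' X) h := by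
  obtain ⟨w, hw, hp⟩ := exists_word hh
  have hne : {n | ∃ w : List Γ.DyerGroup, w.length = n ∧
      (∀ a ∈ w, a ∈ Γ.gen '' X ∪ (Γ.gen '' X)⁻¹) ∧ w.prod = h}.Nonempty := ⟨_, w, rfl, hw, hp⟩
  obtain ⟨w', hl, hw', hp'⟩ := Nat.sInf_mem hne
  exact ⟨w', hw', hp', hl⟩

end DyerGraph

/-- For every `X ⊆ V`, the pair `(D_X, X)` is admissible in `(D, V)`. -/
theorem parabolic_admissible
    {V : Type} [Fintype V] (Γ : DyerGraph V) (X : Set V) :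
    Admissible (⊤ : Subgroup Γ.DyerGroup) (Set.range Γ.gen)
      (Γ.parabolic X) (Γ.gen '' X) := by
  have hrange : Set.range Γ.gen = Γ.gen '' Set.univ := Set.image_univ.symm
  rw [hrange]
  have hmem : ∀ g, g ∈ Γ.parabolic Set.univ := fun g => by
    rw [DyerGraph.parabolic_univ]; trivial
  have huniq : ∀ h ∈ Γ.parabolic X, ∀ u ∈ Γ.transv X, ∀ h' ∈ Γ.parabolic X,
      ∀ u' ∈ Γ.transv X, h * u = h' * u' → h = h' ∧ u = u' := by
    intro h hh u hu h' hh' u' hu' e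
    have h1 : h'⁻¹ * h = 1 := DyerGraph.transv_unique (mul_mem (inv_mem hh') hh) hu hu'
      (by rw [mul_assoc, e, inv_mul_cancel_left])
    have h2 : h = h' := (inv_mul_eq_one.1 h1).symm
    subst h2
    exact ⟨rfl, mul_left_cancel e⟩
  refine ⟨le_top, Set.image_mono (Set.subset_univ X), Γ.transv X, fun _ _ => trivial,
    DyerGraph.one_mem_transv, ?_, ?_⟩
  · intro g _
    obtain ⟨w, hw, rfl⟩ := DyerGraph.exists_word (hmem g)
    obtain ⟨w₁, w₂, h1, -, hu, hp, -⟩ := DyerGraph.word_split (X := X) w hw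
    refine ⟨(w₁.prod, w₂.prod), ⟨h1.prod_mem, hu, hp⟩, ?_⟩
    rintro ⟨h, u⟩ ⟨hh, hu', e⟩
    obtain ⟨e1, e2⟩ := huniq h hh u hu' _ h1.prod_mem _ hu (e.trans hp.symm)
    rw [e1, e2]
  · intro h hh u hu
    apply le_antisymm
    · obtain ⟨w₁, hw₁, hp₁, hl₁⟩ := DyerGraph.wordLength_attained hh
      obtain ⟨w₂, hw₂, hp₂, hl₂⟩ := DyerGraph.wordLength_attained (hmem u)
      have hw : Γ.IsWord Set.univ (w₁ ++ w₂) := by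
        intro a ha
        rcases List.mem_append.1 ha with ha | ha
        · obtain ⟨x, -, hx⟩ := DyerGraph.exists_letter.1 (hw₁ a ha)
          exact DyerGraph.exists_letter.2 ⟨x, trivial, hx⟩
        · exact hw₂ a ha
      have := DyerGraph.wordLength_le hw
      rwa [List.prod_append, hp₁, hp₂, List.length_append, hl₁, hl₂] at this
    · obtain ⟨w, hw, hp, hl⟩ := DyerGraph.wordLength_attained (hmem (h * u))
      obtain ⟨w₁, w₂, h1, h2, hu', hp', hl'⟩ := DyerGraph.word_split (X := X) w hw
      obtain ⟨e1, e2⟩ := huniq _ h1.prod_mem _ hu' h hh u hu (hp'.trans hp)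
      have l1 := DyerGraph.wordLength_le h1
      have l2 := DyerGraph.wordLength_le h2
      rw [e1] at l1
      rw [e2] at l2
      omega
end
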